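/- For the equioriented type A_ℓ quiver x₀ → x₁ → ⋯ → x_ℓ, a central charge α : Q₀ → ℝ is complete (the HN type along α determines a representation up to isomorphism) if and only if α(x_i) > α(x_{i+1}) for all 0 ≤ i ≤ ℓ−1. -/

import Mathlib

open scoped BigOperators

/-- A finite-dimensional representation of a quiver with vertex set `Q₀`,
edge set `Q₁`, source map `σ` and target map `τ`, over a field `K`. -/
structure QRep (Q₀ Q₁ : Type) (σ τ : Q₁ → Q₀) (K : Type) [Field K] where
  V : Q₀ → Type
  [addgrp : ∀ x, AddCommGroup (V x)]
  [mod : ∀ x, Module K (V x)]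
  [fd : ∀ x, FiniteDimensional K (V x)]
  f : ∀ e, V (σ e) →ₗ[K] V (τ e)

attribute [instance] QRep.addgrp QRep.mod QRep.fd

namespace QRep

variable {Q₀ Q₁ : Type} {σ τ : Q₁ → Q₀} {K : Type} [Field K]

/-- A family of subspaces forms a subrepresentation if it is invariant under the edge maps. -/
def IsSubrep (M : QRep Q₀ Q₁ σ τ K) (W : ∀ x, Submodule K (M.V x)) : Prop :=
  ∀ e, Submodule.map (M.f e) (W (σ e)) ≤ W (τ e)

variable [Fintype Q₀]

/-- The slope of a dimension vector along a central charge `α`. -/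
noncomputable def slopeVec (α : Q₀ → ℝ) (d : Q₀ → ℕ) : ℝ :=
  (∑ x, α x * (d x : ℝ)) / (∑ x, (d x : ℝ))

/-- The dimension vector of a representation. -/
noncomputable def dimVec (M : QRep Q₀ Q₁ σ τ K) (x : Q₀) : ℕ :=
  Module.finrank K (M.V x)

/-- The dimension vector of a family of subspaces. -/
noncomputable def dimVecOf (M : QRep Q₀ Q₁ σ τ K) (W : ∀ x, Submodule K (M.V x)) (x : Q₀) : ℕ :=
  Module.finrank K (W x)

/-- The slope of a representation along a central charge `α`. -/
noncomputable def slope (α : Q₀ → ℝ) (M : QRep Q₀ Q₁ σ τ K) : ℝ :=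
  slopeVec α (dimVec M)

def Nonzero (M : QRep Q₀ Q₁ σ τ K) : Prop := ∃ x, dimVec M x ≠ 0

/-- `α`-semistability: every nonzero subrepresentation has slope at most the slope of `M`. -/
def Semistable (α : Q₀ → ℝ) (M : QRep Q₀ Q₁ σ τ K) : Prop :=
  ∀ W, IsSubrep M W → (∃ x, W x ≠ ⊥) → slopeVec α (dimVecOf M W) ≤ slope α M

/-- `α`-stability: every nonzero proper subrepresentation has slope strictly less
than the slope of `M`. -/
def Stable (α : Q₀ → ℝ) (M : QRep Q₀ Q₁ σ τ K) : Prop :=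
  ∀ W, IsSubrep M W → (∃ x, W x ≠ ⊥) → (∃ x, W x ≠ ⊤) →
    slopeVec α (dimVecOf M W) < slope α M

/-- The subrepresentation determined by an invariant family of subspaces, as a representation. -/
noncomputable def subrep (M : QRep Q₀ Q₁ σ τ K) (W : ∀ x, Submodule K (M.V x))
    (h : IsSubrep M W) : QRep Q₀ Q₁ σ τ K where
  V x := W x
  f e := (M.f e).restrict (fun v hv => h e ⟨v, hv, rfl⟩)

/-- The quotient representation of `M` by an invariant family of subspaces. -/
noncomputable def quotRep (M : QRep Q₀ Q₁ σ τ K) (W : ∀ x, Submodule K (M.V x))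
    (h : IsSubrep M W) : QRep Q₀ Q₁ σ τ K where
  V x := M.V x ⧸ W x
  f e := Submodule.mapQ _ _ (M.f e) (Submodule.map_le_iff_le_comap.mp (h e))

/-- The direct sum of two representations. -/
noncomputable def prodRep (M N : QRep Q₀ Q₁ σ τ K) : QRep Q₀ Q₁ σ τ K where
  V x := M.V x × N.V x
  f e := (M.f e).prodMap (N.f e)

end QRep

namespace QRep

variable {Q₀ Q₁ : Type} {σ τ : Q₁ → Q₀} {K : Type} [Field K] [Fintype Q₀]

/-- The dimension vector of the subquotient `B/A`. -/
noncomputable def quotDimVec (M : QRep Q₀ Q₁ σ τ K) (A B : ∀ x, Submodule K (M.V x))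
    (x : Q₀) : ℕ :=
  Module.finrank K (B x) - Module.finrank K (A x)

/-- Semistability of the subquotient `B/A` of `M`, expressed via the correspondence
between subrepresentations of `B/A` and subrepresentations `Z` of `M` with `A ≤ Z ≤ B`. -/
def SemistableQuot (α : Q₀ → ℝ) (M : QRep Q₀ Q₁ σ τ K)
    (A B : ∀ x, Submodule K (M.V x)) : Prop :=
  ∀ Z, IsSubrep M Z → (∀ x, A x ≤ Z x) → (∀ x, Z x ≤ B x) → (∃ x, Z x ≠ A x) →
    slopeVec α (quotDimVec M A Z) ≤ slopeVec α (quotDimVec M A B)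

/-- A Harder–Narasimhan filtration of `M` along the central charge `α`:
a strictly increasing finite filtration by subrepresentations, starting at `0`
and ending at `M`, whose successive quotients are `α`-semistable of strictly
decreasing slopes. -/
structure HNFiltration (α : Q₀ → ℝ) (M : QRep Q₀ Q₁ σ τ K) where
  n : ℕ
  W : Fin (n+1) → ∀ x, Submodule K (M.V x)
  subrep : ∀ i, IsSubrep M (W i)
  bot : ∀ x, W 0 x = ⊥
  top : ∀ x, W (Fin.last n) x = ⊤
  mono : ∀ (i : Fin n) (x : Q₀), W i.castSucc x ≤ W i.succ x
  proper : ∀ i : Fin n, ∃ x, W i.castSucc x ≠ W i.succ x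
  ss : ∀ i : Fin n, SemistableQuot α M (W i.castSucc) (W i.succ)
  dec : ∀ i j : Fin n, i < j →
    slopeVec α (quotDimVec M (W j.castSucc) (W j.succ)) <
      slopeVec α (quotDimVec M (W i.castSucc) (W i.succ))

open scoped Classical in
/-- The Harder–Narasimhan type of a filtration, viewed as a function `ℝ → (Q₀ → ℕ)`
sending a slope to the dimension vector of the corresponding semistable subquotient
(and to `0` if no subquotient has that slope). -/
noncomputable def HNFiltration.typeFun {α : Q₀ → ℝ} {M : QRep Q₀ Q₁ σ τ K}
    (F : HNFiltration α M) : ℝ → Q₀ → ℕ := fun lam x =>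
  ∑ i : Fin F.n,
    if slopeVec α (quotDimVec M (F.W i.castSucc) (F.W i.succ)) = lam then
      quotDimVec M (F.W i.castSucc) (F.W i.succ) x
    else 0

/-- An isomorphism of quiver representations. -/
structure RepIso (M N : QRep Q₀ Q₁ σ τ K) where
  g : ∀ x, M.V x ≃ₗ[K] N.V x
  comm : ∀ e v, g (τ e) (M.f e v) = N.f e (g (σ e) v)

/-- Two representations have equal HN type along `α`. -/
def SameHNType (α : Q₀ → ℝ) (M N : QRep Q₀ Q₁ σ τ K) : Prop :=
  ∃ (F : HNFiltration α M) (G : HNFiltration α N), F.typeFun = G.typeFun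

/-- A central charge is complete if equality of HN types implies isomorphism. -/
def Complete (α : Q₀ → ℝ) : Prop :=
  ∀ M N : QRep Q₀ Q₁ σ τ K, SameHNType α M N → Nonempty (RepIso M N)

/-- A representation is indecomposable if it is nonzero and admits no nontrivial
direct sum decomposition. -/
def Indecomposable (M : QRep Q₀ Q₁ σ τ K) : Prop :=
  Nonzero M ∧ ∀ A B : QRep Q₀ Q₁ σ τ K,
    Nonempty (RepIso M (prodRep A B)) → ¬(Nonzero A ∧ Nonzero B)

end QRep

theorem finrank_comap_add_finrank_map {K A B C : Type*} [Field K] [AddCommGroup A] [Module K A]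
    [AddCommGroup B] [Module K B] [AddCommGroup C] [Module K C] [FiniteDimensional K B]
    {i : A →ₗ[K] B} {p : B →ₗ[K] C} (hi : Function.Injective i) (hip : i.range = p.ker)
    (Z : Submodule K B) :
    Module.finrank K (Z.comap i) + Module.finrank K (Z.map p) = Module.finrank K Z := by
  rw [← LinearMap.finrank_range_add_finrank_ker (p.domRestrict Z), add_comm,
    LinearMap.range_domRestrict, (Submodule.equivMapOfInjective i hi _).finrank_eq,
    Submodule.map_comap_eq, hip, LinearMap.ker_domRestrict, ← Submodule.finrank_map_subtype_eq,
    Submodule.map_comap_subtype, inf_comm]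

theorem finrank_submodule_prod {K A B : Type*} [Field K] [AddCommGroup A] [Module K A]
    [AddCommGroup B] [Module K B] [FiniteDimensional K A] [FiniteDimensional K B]
    (p : Submodule K A) (q : Submodule K B) :
    Module.finrank K (p.prod q) = Module.finrank K p + Module.finrank K q := by
  rw [← finrank_comap_add_finrank_map LinearMap.inl_injective (LinearMap.range_inl K A B),
    Submodule.prod_comap_inl, Submodule.prod_map_snd]

namespace QRep

section Maximizer

variable {Q₀ Q₁ : Type} {σ τ : Q₁ → Q₀} {K : Type} [Field K]

theorem IsSubrep.inf {M : QRep Q₀ Q₁ σ τ K} {A B : ∀ x, Submodule K (M.V x)}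
    (hA : IsSubrep M A) (hB : IsSubrep M B) : IsSubrep M (A ⊓ B) := fun e =>
  (Submodule.map_inf_le _).trans (inf_le_inf (hA e) (hB e))

theorem IsSubrep.sup {M : QRep Q₀ Q₁ σ τ K} {A B : ∀ x, Submodule K (M.V x)}
    (hA : IsSubrep M A) (hB : IsSubrep M B) : IsSubrep M (A ⊔ B) := fun e => by
  simpa only [Pi.sup_apply, Submodule.map_sup] using sup_le_sup (hA e) (hB e)

theorem isSubrep_bot (M : QRep Q₀ Q₁ σ τ K) : IsSubrep M ⊥ := fun e => by simp

theorem isSubrep_top (M : QRep Q₀ Q₁ σ τ K) : IsSubrep M ⊤ := fun _ => le_top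

variable [Fintype Q₀]

theorem sum_sub_mul_eq (α : Q₀ → ℝ) (t : ℝ) (d : Q₀ → ℕ) :
    ∑ x, (α x - t) * (d x : ℝ) = (slopeVec α d - t) * ∑ x, (d x : ℝ) := by
  have hsum : ∑ x, (α x - t) * (d x : ℝ) = ∑ x, α x * (d x : ℝ) - t * ∑ x, (d x : ℝ) := by
    simp only [sub_mul, Finset.sum_sub_distrib, Finset.mul_sum]
  rcases eq_or_ne (∑ x, (d x : ℝ)) 0 with h0 | h0
  · have hd : ∀ x, (d x : ℝ) = 0 := fun x =>
      (Finset.sum_eq_zero_iff_of_nonneg (fun x _ => Nat.cast_nonneg (d x))).1 h0 x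
        (Finset.mem_univ x)
    simp [hd]
  · rw [hsum, slopeVec, sub_mul, div_mul_cancel₀ _ h0]

/-- The degree of a family of subspaces with respect to the shifted central charge `α - t`. -/
noncomputable def excess (α : Q₀ → ℝ) (t : ℝ) (M : QRep Q₀ Q₁ σ τ K)
    (W : ∀ x, Submodule K (M.V x)) : ℝ :=
  ∑ x, (α x - t) * (Module.finrank K (W x) : ℝ)

theorem excess_sup_add_excess_inf (α : Q₀ → ℝ) (t : ℝ) (M : QRep Q₀ Q₁ σ τ K)
    (A B : ∀ x, Submodule K (M.V x)) :
    excess α t M (A ⊔ B) + excess α t M (A ⊓ B) = excess α t M A + excess α t M B := by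
  simp only [excess, ← Finset.sum_add_distrib, ← mul_add, Pi.sup_apply, Pi.inf_apply]
  refine Finset.sum_congr rfl fun x _ => ?_
  have := Submodule.finrank_sup_add_finrank_inf_eq (A x) (B x)
  congr 1
  exact_mod_cast this

theorem excess_sub_excess (α : Q₀ → ℝ) (t : ℝ) (M : QRep Q₀ Q₁ σ τ K)
    {A B : ∀ x, Submodule K (M.V x)} (h : A ≤ B) :
    excess α t M B - excess α t M A =
      (slopeVec α (quotDimVec M A B) - t) * ∑ x, (quotDimVec M A B x : ℝ) := by
  rw [← sum_sub_mul_eq, excess, excess, ← Finset.sum_sub_distrib]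
  refine Finset.sum_congr rfl fun x _ => ?_
  rw [quotDimVec, Nat.cast_sub (Submodule.finrank_mono (h x)), mul_sub]

theorem sum_quotDimVec_pos (M : QRep Q₀ Q₁ σ τ K) {A B : ∀ x, Submodule K (M.V x)}
    (h : A ≤ B) (hne : ∃ x, B x ≠ A x) : 0 < ∑ x, (quotDimVec M A B x : ℝ) := by
  obtain ⟨x, hx⟩ := hne
  refine Finset.sum_pos' (fun x _ => Nat.cast_nonneg _) ⟨x, Finset.mem_univ x, ?_⟩
  have := Submodule.finrank_lt_finrank_of_lt (lt_of_le_of_ne (h x) hx.symm)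
  rw [quotDimVec]
  exact_mod_cast Nat.sub_pos_of_lt this

theorem SemistableQuot.excess_le {α : Q₀ → ℝ} {M : QRep Q₀ Q₁ σ τ K}
    {A B Z : ∀ x, Submodule K (M.V x)} (hss : SemistableQuot α M A B) (hZ : IsSubrep M Z)
    (hAZ : A ≤ Z) (hZB : Z ≤ B) {t : ℝ} (ht : t ≤ slopeVec α (quotDimVec M A B)) :
    excess α t M Z ≤ excess α t M B := by
  have hB := excess_sub_excess α t M (hAZ.trans hZB)
  have hZ' := excess_sub_excess α t M hAZ
  have hle : ∑ x, (quotDimVec M A Z x : ℝ) ≤ ∑ x, (quotDimVec M A B x : ℝ) :=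
    Finset.sum_le_sum fun x _ => by
      rw [quotDimVec, quotDimVec]
      exact_mod_cast Nat.sub_le_sub_right (Submodule.finrank_mono (hZB x)) _
  have h0 : 0 ≤ ∑ x, (quotDimVec M A Z x : ℝ) := Finset.sum_nonneg fun _ _ => Nat.cast_nonneg _
  by_cases hne : ∃ x, Z x ≠ A x
  · have hs := hss Z hZ hAZ hZB hne
    nlinarith [mul_le_mul_of_nonneg_right hs h0,
      mul_le_mul_of_nonneg_left hle (sub_nonneg.2 ht)]
  · push Not at hne
    obtain rfl : Z = A := funext hne
    nlinarith [mul_nonneg (sub_nonneg.2 ht) (h0.trans hle)]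

theorem SemistableQuot.excess_lt {α : Q₀ → ℝ} {M : QRep Q₀ Q₁ σ τ K}
    {A B Z : ∀ x, Submodule K (M.V x)} (hss : SemistableQuot α M A B) (hZ : IsSubrep M Z)
    (hAZ : A ≤ Z) (hZB : Z ≤ B) (hne : Z ≠ A) {t : ℝ}
    (ht : slopeVec α (quotDimVec M A B) < t) : excess α t M Z < excess α t M A := by
  have hne' := Function.ne_iff.1 hne
  have hs := hss Z hZ hAZ hZB hne'
  have hpos := sum_quotDimVec_pos M hAZ hne'
  have := excess_sub_excess α t M hAZ
  nlinarith [mul_pos (sub_pos.2 (hs.trans_lt ht)) hpos]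

/-- `H` is the largest among the subrepresentations of maximal excess. -/
def IsMaximizer (α : Q₀ → ℝ) (t : ℝ) (M : QRep Q₀ Q₁ σ τ K)
    (H : ∀ x, Submodule K (M.V x)) : Prop :=
  IsSubrep M H ∧ ∀ Z, IsSubrep M Z →
    excess α t M Z ≤ excess α t M H ∧ (excess α t M Z = excess α t M H → Z ≤ H)

theorem IsMaximizer.unique {α : Q₀ → ℝ} {t : ℝ} {M : QRep Q₀ Q₁ σ τ K}
    {H H' : ∀ x, Submodule K (M.V x)} (h : IsMaximizer α t M H) (h' : IsMaximizer α t M H') :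
    H = H' := by
  have heq := le_antisymm (h'.2 H h.1).1 (h.2 H' h'.1).1
  exact le_antisymm ((h'.2 H h.1).2 heq) ((h.2 H' h'.1).2 heq.symm)

/-- The part of a Harder–Narasimhan filtration of slope at least `t` is the largest
subrepresentation of maximal excess. -/
theorem HNFiltration.exists_isMaximizer {α : Q₀ → ℝ} {M : QRep Q₀ Q₁ σ τ K}
    (F : HNFiltration α M) (t : ℝ) :
    ∃ H, IsMaximizer α t M H ∧ ∀ x, Module.finrank K (H x) =
      ∑ i : Fin F.n, if t ≤ slopeVec α (quotDimVec M (F.W i.castSucc) (F.W i.succ)) then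
        quotDimVec M (F.W i.castSucc) (F.W i.succ) x else 0 := by
  have key : ∀ k : Fin (F.n + 1), ∃ H, IsSubrep M H ∧
      (∀ Z, IsSubrep M Z → Z ≤ F.W k →
        excess α t M Z ≤ excess α t M H ∧ (excess α t M Z = excess α t M H → Z ≤ H)) ∧
      ((∀ i : Fin F.n, i.castSucc < k →
        t ≤ slopeVec α (quotDimVec M (F.W i.castSucc) (F.W i.succ))) → H = F.W k) ∧
      ∀ x, Module.finrank K (H x) = ∑ i : Fin F.n with i.castSucc < k,
        if t ≤ slopeVec α (quotDimVec M (F.W i.castSucc) (F.W i.succ)) then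
          quotDimVec M (F.W i.castSucc) (F.W i.succ) x else 0 := by
    intro k
    induction k using Fin.induction with
    | zero =>
      have h0 : F.W 0 = ⊥ := funext F.bot
      refine ⟨⊥, isSubrep_bot M, fun Z _ hZ => ?_, fun _ => h0.symm, fun x => by simp⟩
      rw [h0, le_bot_iff] at hZ
      simp [hZ]
    | succ k ih =>
      obtain ⟨H, hH, hmax, hall, hdim⟩ := ih
      have hmono : F.W k.castSucc ≤ F.W k.succ := F.mono k
      have hfilter : (Finset.univ.filter fun i : Fin F.n => i.castSucc < k.succ) =
          insert k (Finset.univ.filter fun i : Fin F.n => i.castSucc < k.castSucc) := by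
        ext i
        simp only [Finset.mem_filter, Finset.mem_univ, true_and, Finset.mem_insert,
          Fin.castSucc_lt_castSucc_iff, Fin.castSucc_lt_succ_iff, le_iff_eq_or_lt]
      have hP : ∀ Z, IsSubrep M Z → Z ≤ F.W k.succ →
          IsSubrep M (Z ⊔ F.W k.castSucc) ∧ F.W k.castSucc ≤ Z ⊔ F.W k.castSucc ∧
            Z ⊔ F.W k.castSucc ≤ F.W k.succ := fun Z hZ hle =>
        ⟨hZ.sup (F.subrep _), le_sup_right, sup_le hle hmono⟩
      by_cases ht : t ≤ slopeVec α (quotDimVec M (F.W k.castSucc) (F.W k.succ))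
      · have hslope : ∀ i : Fin F.n, i.castSucc < k.castSucc →
            t ≤ slopeVec α (quotDimVec M (F.W i.castSucc) (F.W i.succ)) := fun i hi =>
          ht.trans (F.dec i k (by simpa using hi)).le
        obtain rfl := hall hslope
        refine ⟨F.W k.succ, F.subrep _, fun Z hZ hle => ⟨?_, fun _ => hle⟩, fun _ => rfl,
          fun x => ?_⟩
        · obtain ⟨h1, h2, h3⟩ := hP Z hZ hle
          have := (F.ss k).excess_le h1 h2 h3 ht
          have := excess_sup_add_excess_inf α t M Z (F.W k.castSucc)
          have := (hmax _ (hZ.inf (F.subrep k.castSucc)) inf_le_right).1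
          linarith
        · rw [hfilter, Finset.sum_insert (by simp), ← hdim, if_pos ht, quotDimVec,
            Nat.sub_add_cancel (Submodule.finrank_mono (hmono x))]
      · refine ⟨H, hH, fun Z hZ hle => ?_, fun h => absurd (h k (by simp [Fin.lt_def])) ht,
          fun x => ?_⟩
        · obtain ⟨h1, h2, h3⟩ := hP Z hZ hle
          by_cases hZk : Z ≤ F.W k.castSucc
          · exact hmax Z hZ hZk
          · have := (F.ss k).excess_lt h1 h2 h3 (fun h => hZk (sup_eq_right.1 h)) (not_le.1 ht)
            have := excess_sup_add_excess_inf α t M Z (F.W k.castSucc)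
            have := (hmax _ (hZ.inf (F.subrep k.castSucc)) inf_le_right).1
            have hlt : excess α t M Z < excess α t M H := by linarith
            exact ⟨hlt.le, fun h => absurd h hlt.ne⟩
        · rw [hfilter, Finset.sum_insert (by simp), if_neg ht, zero_add, hdim]
  obtain ⟨H, hH, hmax, -, hdim⟩ := key (Fin.last F.n)
  have htop : F.W (Fin.last F.n) = ⊤ := funext F.top
  refine ⟨H, ⟨hH, fun Z hZ => hmax Z hZ (htop ▸ le_top)⟩, fun x => ?_⟩
  rw [hdim, Finset.filter_true_of_mem fun i _ => Fin.castSucc_lt_last i]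

theorem HNFiltration.sum_typeFun {α : Q₀ → ℝ} {M : QRep Q₀ Q₁ σ τ K}
    (F : HNFiltration α M) (t : ℝ) (S : Finset ℝ)
    (hS : ∀ i, slopeVec α (quotDimVec M (F.W (Fin.castSucc i)) (F.W (Fin.succ i))) ∈ S) (x : Q₀) :
    ∑ s ∈ S with t ≤ s, F.typeFun s x =
      ∑ i : Fin F.n, if t ≤ slopeVec α (quotDimVec M (F.W i.castSucc) (F.W i.succ)) then
        quotDimVec M (F.W i.castSucc) (F.W i.succ) x else 0 := by
  simp only [typeFun]
  rw [Finset.sum_comm]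
  refine Finset.sum_congr rfl fun i _ => ?_
  rw [Finset.sum_ite_eq]
  simp [hS i]

/-- Representations of the same Harder–Narasimhan type have largest subrepresentations of maximal
excess of the same dimension vector. -/
theorem SameHNType.exists_isMaximizer {α : Q₀ → ℝ} {M N : QRep Q₀ Q₁ σ τ K}
    (h : SameHNType α M N) (t : ℝ) :
    ∃ H H', IsMaximizer α t M H ∧ IsMaximizer α t N H' ∧
      ∀ x, Module.finrank K (H x) = Module.finrank K (H' x) := by
  classical
  obtain ⟨F, G, hFG⟩ := h
  obtain ⟨H, hH, hdim⟩ := F.exists_isMaximizer t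
  obtain ⟨H', hH', hdim'⟩ := G.exists_isMaximizer t
  let S : Finset ℝ :=
    (Finset.univ.image fun i => slopeVec α (quotDimVec M (F.W (Fin.castSucc i)) (F.W (Fin.succ i))))
    ∪ Finset.univ.image fun i => slopeVec α (quotDimVec N (G.W (Fin.castSucc i)) (G.W (Fin.succ i)))
  refine ⟨H, H', hH, hH', fun x => ?_⟩
  rw [hdim, hdim', ← F.sum_typeFun t S (by simp [S]), ← G.sum_typeFun t S (by simp [S]), hFG]

/-- An isomorphism carries the largest subrepresentation of maximal excess to the one of the
target. -/
theorem IsMaximizer.map {α : Q₀ → ℝ} {t : ℝ} {M N : QRep Q₀ Q₁ σ τ K}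
    {H : ∀ x, Submodule K (M.V x)} (h : IsMaximizer α t M H) (φ : RepIso M N) :
    IsMaximizer α t N fun x => (H x).map (φ.g x).toLinearMap := by
  refine ⟨fun e => ?_, fun Z hZ => ?_⟩
  · rintro _ ⟨_, ⟨v, hv, rfl⟩, rfl⟩
    exact ⟨M.f e v, h.1 e ⟨v, hv, rfl⟩, φ.comm e v⟩
  · have hsub : IsSubrep M fun x => (Z x).comap (φ.g x).toLinearMap := by
      rintro e _ ⟨v, hv, rfl⟩
      change φ.g (τ e) (M.f e v) ∈ Z (τ e)
      rw [φ.comm]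
      exact hZ e ⟨_, hv, rfl⟩
    have hZeq : ∀ x, ((Z x).comap (φ.g x).toLinearMap).map (φ.g x).toLinearMap = Z x := fun x =>
      Submodule.map_comap_eq_of_surjective (φ.g x).surjective _
    have hZex : excess α t M (fun x => (Z x).comap (φ.g x).toLinearMap) = excess α t N Z := by
      refine Finset.sum_congr rfl fun x _ => ?_
      rw [← LinearEquiv.finrank_map_eq (φ.g x), hZeq]
    have hHex : excess α t N (fun x => (H x).map (φ.g x).toLinearMap) = excess α t M H :=
      Finset.sum_congr rfl fun x _ => by rw [LinearEquiv.finrank_map_eq (φ.g x)]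
    obtain ⟨hle, heq⟩ := h.2 _ hsub
    rw [hHex, ← hZex]
    refine ⟨hle, fun he x => ?_⟩
    rw [← hZeq x]
    exact Submodule.map_mono (heq he x)

theorem IsMaximizer.prod {α : Q₀ → ℝ} {t : ℝ} {M N : QRep Q₀ Q₁ σ τ K}
    {H : ∀ x, Submodule K (M.V x)} {H' : ∀ x, Submodule K (N.V x)}
    (h : IsMaximizer α t M H) (h' : IsMaximizer α t N H') :
    IsMaximizer α t (prodRep M N) fun x => (H x).prod (H' x) := by
  have hex : excess α t (prodRep M N) (fun x => (H x).prod (H' x)) =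
      excess α t M H + excess α t N H' := by
    simp only [excess, ← Finset.sum_add_distrib, ← mul_add]
    refine Finset.sum_congr rfl fun x _ => ?_
    congr 1
    exact_mod_cast finrank_submodule_prod (H x) (H' x)
  refine ⟨?_, fun Z hZ => ?_⟩
  · rintro e _ ⟨v, hv, rfl⟩
    exact ⟨h.1 e ⟨v.1, hv.1, rfl⟩, h'.1 e ⟨v.2, hv.2, rfl⟩⟩
  have hfst : IsSubrep M fun x => (Z x).map (LinearMap.fst K (M.V x) (N.V x)) := by
    rintro e _ ⟨_, ⟨v, hv, rfl⟩, rfl⟩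
    exact ⟨_, hZ e ⟨v, hv, rfl⟩, rfl⟩
  have hsnd : IsSubrep N fun x => (Z x).map (LinearMap.snd K (M.V x) (N.V x)) := by
    rintro e _ ⟨_, ⟨v, hv, rfl⟩, rfl⟩
    exact ⟨_, hZ e ⟨v, hv, rfl⟩, rfl⟩
  have hinl : IsSubrep M fun x => (Z x).comap (LinearMap.inl K (M.V x) (N.V x)) := by
    rintro e _ ⟨v, hv, rfl⟩
    have hmem : (M.f e v, N.f e 0) ∈ Z (τ e) := hZ e ⟨_, hv, rfl⟩
    rw [map_zero] at hmem
    exact hmem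
  have hinr : IsSubrep N fun x => (Z x).comap (LinearMap.inr K (M.V x) (N.V x)) := by
    rintro e _ ⟨v, hv, rfl⟩
    have hmem : (M.f e 0, N.f e v) ∈ Z (τ e) := hZ e ⟨_, hv, rfl⟩
    rw [map_zero] at hmem
    exact hmem
  have hl : excess α t M (fun x => (Z x).comap (LinearMap.inl K (M.V x) (N.V x))) +
      excess α t N (fun x => (Z x).map (LinearMap.snd K (M.V x) (N.V x))) =
      excess α t (prodRep M N) Z := by
    simp only [excess, ← Finset.sum_add_distrib, ← mul_add]
    refine Finset.sum_congr rfl fun x _ => ?_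
    congr 1
    exact_mod_cast finrank_comap_add_finrank_map LinearMap.inl_injective
      (LinearMap.range_inl K (M.V x) (N.V x)) (Z x)
  have hr : excess α t N (fun x => (Z x).comap (LinearMap.inr K (M.V x) (N.V x))) +
      excess α t M (fun x => (Z x).map (LinearMap.fst K (M.V x) (N.V x))) =
      excess α t (prodRep M N) Z := by
    simp only [excess, ← Finset.sum_add_distrib, ← mul_add]
    refine Finset.sum_congr rfl fun x _ => ?_
    congr 1
    exact_mod_cast finrank_comap_add_finrank_map LinearMap.inr_injective
      (LinearMap.range_inr K (M.V x) (N.V x)) (Z x)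
  obtain ⟨hfst, hfst'⟩ := h.2 _ hfst
  obtain ⟨hsnd, hsnd'⟩ := h'.2 _ hsnd
  obtain ⟨hinl, -⟩ := h.2 _ hinl
  obtain ⟨hinr, -⟩ := h'.2 _ hinr
  rw [hex]
  refine ⟨by linarith, fun he x v hv => ⟨hfst' (by linarith) x ⟨v, hv, rfl⟩,
    hsnd' (by linarith) x ⟨v, hv, rfl⟩⟩⟩

end Maximizer

end QRep

namespace QRep

section Isomorphism

variable {Q₀ Q₁ : Type} {σ τ : Q₁ → Q₀} {K : Type} [Field K] [Fintype Q₀]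

def RepIso.refl (M : QRep Q₀ Q₁ σ τ K) : RepIso M M :=
  ⟨fun _ => LinearEquiv.refl K _, fun _ _ => rfl⟩

def RepIso.symm {M N : QRep Q₀ Q₁ σ τ K} (φ : RepIso M N) : RepIso N M :=
  ⟨fun x => (φ.g x).symm, fun e v => by
    rw [LinearEquiv.symm_apply_eq, φ.comm, LinearEquiv.apply_symm_apply]⟩

def RepIso.trans {M N P : QRep Q₀ Q₁ σ τ K} (φ : RepIso M N) (ψ : RepIso N P) : RepIso M P :=
  ⟨fun x => (φ.g x).trans (ψ.g x), fun e v => by simp [φ.comm, ψ.comm]⟩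

def RepIso.prodCongrRight (P : QRep Q₀ Q₁ σ τ K) {M N : QRep Q₀ Q₁ σ τ K} (φ : RepIso M N) :
    RepIso (prodRep P M) (prodRep P N) :=
  ⟨fun x => (LinearEquiv.refl K (P.V x)).prodCongr (φ.g x), fun e v =>
    Prod.ext rfl (φ.comm e v.2)⟩

def RepIso.prodLeftComm (M N P : QRep Q₀ Q₁ σ τ K) :
    RepIso (prodRep M (prodRep N P)) (prodRep N (prodRep M P)) :=
  ⟨fun _ =>
    { toFun := fun v => (v.2.1, v.1, v.2.2)
      invFun := fun v => (v.2.1, v.1, v.2.2)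
      map_add' := fun _ _ => rfl
      map_smul' := fun _ _ => rfl
      left_inv := fun _ => rfl
      right_inv := fun _ => rfl }, fun _ _ => rfl⟩

end Isomorphism

section Interval

variable {K : Type} [Field K] {ℓ : ℕ}

/-- The interval representation supported on `[a, b]`, with structure maps multiplied by `c`. -/
def intervalRep (c : K) (a b : Fin (ℓ + 1)) :
    QRep (Fin (ℓ + 1)) (Fin ℓ) Fin.castSucc Fin.succ K where
  V x := PLift (a ≤ x ∧ x ≤ b) → K
  f e := c •
    { toFun := fun v _ => if h : a ≤ e.castSucc ∧ e.castSucc ≤ b then v ⟨h⟩ else 0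
      map_add' := fun v w => by ext; simp only [Pi.add_apply]; split_ifs <;> simp
      map_smul' := fun r v => by ext; simp }

theorem intervalRep_f_apply (c : K) (a b : Fin (ℓ + 1)) (e : Fin ℓ)
    (v : (intervalRep c a b).V e.castSucc) (q : PLift (a ≤ e.succ ∧ e.succ ≤ b)) :
    (intervalRep c a b).f e v q =
      c * if h : a ≤ e.castSucc ∧ e.castSucc ≤ b then v ⟨h⟩ else 0 := rfl

theorem finrank_intervalRep (c : K) (a b x : Fin (ℓ + 1)) :
    Module.finrank K ((intervalRep c a b).V x) = if a ≤ x ∧ x ≤ b then 1 else 0 := by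
  change Module.finrank K (PLift (a ≤ x ∧ x ≤ b) → K) = _
  rw [Module.finrank_fintype_fun_eq_card]
  split_ifs with h
  · exact Fintype.card_eq_one_iff.2 ⟨⟨h⟩, fun _ => rfl⟩
  · exact Fintype.card_eq_zero_iff.2 ⟨fun q => h q.down⟩

/-- The direct sum of the interval representations indexed by a list of intervals. -/
noncomputable def sumRep (K : Type) [Field K] : List (Fin (ℓ + 1) × Fin (ℓ + 1)) →
    QRep (Fin (ℓ + 1)) (Fin ℓ) Fin.castSucc Fin.succ K
  | [] => { V := fun _ => PUnit, f := fun _ => 0 }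
  | p :: L => prodRep (intervalRep 1 p.1 p.2) (sumRep K L)

theorem sumRep_congr_of_perm {L L' : List (Fin (ℓ + 1) × Fin (ℓ + 1))} (h : L.Perm L') :
    Nonempty (RepIso (sumRep K L) (sumRep K L')) := by
  induction h with
  | nil => exact ⟨RepIso.refl _⟩
  | cons p _ ih => exact ih.map fun φ => φ.prodCongrRight _
  | swap p q L => exact ⟨RepIso.prodLeftComm _ _ _⟩
  | trans _ _ ih₁ ih₂ => exact ih₁.elim fun φ => ih₂.map fun ψ => φ.trans ψ

variable {M : QRep (Fin (ℓ + 1)) (Fin ℓ) Fin.castSucc Fin.succ K}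

/-- An interval summand splits off along a compatible family of vectors `u` and functionals `φ`. -/
theorem exists_repIso_prodRep {a b : Fin (ℓ + 1)} (u : ∀ x, M.V x) (φ : ∀ x, M.V x →ₗ[K] K)
    (hone : ∀ x, a ≤ x ∧ x ≤ b → φ x (u x) = 1)
    (hφ : ∀ x, ¬(a ≤ x ∧ x ≤ b) → φ x = 0) (hu : ∀ x, ¬(a ≤ x ∧ x ≤ b) → u x = 0)
    (hcomp : ∀ e : Fin ℓ, a ≤ e.succ ∧ e.succ ≤ b → φ e.succ ∘ₗ M.f e = φ e.castSucc)
    (hmap : ∀ e : Fin ℓ, a ≤ e.castSucc ∧ e.castSucc ≤ b →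
      M.f e (u e.castSucc) = u e.succ) :
    ∃ h : IsSubrep M fun x => (φ x).ker,
      Nonempty (RepIso M (prodRep (intervalRep 1 a b) (subrep M _ h))) := by
  have hsub : IsSubrep M fun x => (φ x).ker := by
    rintro e _ ⟨v, hv, rfl⟩
    change φ e.succ (M.f e v) = 0
    by_cases h : a ≤ e.succ ∧ e.succ ≤ b
    · rw [← LinearMap.comp_apply, hcomp e h]
      exact hv
    · rw [hφ _ h, LinearMap.zero_apply]
  have hproj : ∀ x m, m - φ x m • u x ∈ (φ x).ker := by
    intro x m
    rw [LinearMap.mem_ker]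
    by_cases h : a ≤ x ∧ x ≤ b
    · simp [hone x h]
    · simp [hφ x h]
  refine ⟨hsub, ⟨⟨fun x =>
    { toFun := fun m => (fun _ => φ x m, ⟨m - φ x m • u x, hproj x m⟩)
      invFun := fun w => (if h : a ≤ x ∧ x ≤ b then w.1 ⟨h⟩ • u x else 0) + w.2.1
      map_add' := fun m n => Prod.ext (funext fun _ => map_add _ _ _) (Subtype.ext ?_)
      map_smul' := fun r m => Prod.ext (funext fun _ => map_smul _ _ _) (Subtype.ext ?_)
      left_inv := fun m => ?_
      right_inv := fun w => ?_ }, fun e m => Prod.ext (funext fun q => ?_) (Subtype.ext ?_)⟩⟩⟩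
  · change m + n - φ x (m + n) • u x = (m - φ x m • u x) + (n - φ x n • u x)
    rw [map_add]
    module
  · change r • m - φ x (r • m) • u x = r • (m - φ x m • u x)
    rw [map_smul, smul_eq_mul]
    module
  · by_cases h : a ≤ x ∧ x ≤ b
    · simp [h]
    · simp [h, hu x h]
  · have hw : φ x w.2.1 = 0 := w.2.2
    by_cases h : a ≤ x ∧ x ≤ b
    · have hv : φ x (w.1 ⟨h⟩ • u x + w.2.1) = w.1 ⟨h⟩ := by simp [hone x h, hw]
      refine Prod.ext (funext fun q => ?_) (Subtype.ext ?_)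
      · simpa [h] using hv
      · simp [h, hone x h, hw]
    · refine Prod.ext (funext fun q => absurd q.down h) (Subtype.ext ?_)
      simp [h, hu x h]
  · change φ e.succ (M.f e m) = 1 * if h : a ≤ e.castSucc ∧ e.castSucc ≤ b then φ e.castSucc m else 0
    rw [← LinearMap.comp_apply, hcomp e q.down, one_mul]
    split_ifs with h
    · rfl
    · rw [hφ _ h, LinearMap.zero_apply]
  · change M.f e m - φ e.succ (M.f e m) • u e.succ = M.f e (m - φ e.castSucc m • u e.castSucc)
    rw [map_sub, map_smul]
    congr 1
    by_cases h : a ≤ e.succ ∧ e.succ ≤ b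
    · rw [← LinearMap.comp_apply, hcomp e h]
      by_cases h' : a ≤ e.castSucc ∧ e.castSucc ≤ b
      · rw [hmap e h']
      · simp [hφ _ h']
    · by_cases h' : a ≤ e.castSucc ∧ e.castSucc ≤ b
      · rw [hmap e h', hu _ h, smul_zero, smul_zero]
      · simp [hu _ h, hφ _ h']

theorem exists_propagated_vector (s : ∀ x, M.V x) :
    ∃ u : ∀ x, M.V x, u 0 = s 0 ∧ ∀ e : Fin ℓ, u e.succ = s e.succ + M.f e (u e.castSucc) :=
  ⟨fun x => Fin.induction (motive := fun x => M.V x) (s 0)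
    (fun e w => s e.succ + M.f e w) x, rfl, fun _ => rfl⟩

theorem exists_propagated_functional (s : ∀ x, M.V x →ₗ[K] K) :
    ∃ φ : ∀ x, M.V x →ₗ[K] K, φ (Fin.last ℓ) = s (Fin.last ℓ) ∧
      ∀ e : Fin ℓ, φ e.castSucc = s e.castSucc + φ e.succ ∘ₗ M.f e :=
  ⟨fun x => Fin.reverseInduction (motive := fun x => M.V x →ₗ[K] K) (s (Fin.last ℓ))
    (fun e w => s e.castSucc + w ∘ₗ M.f e) x, by simp, fun e => by simp⟩

/-- A nonzero representation has an interval summand. -/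
theorem exists_interval_summand (hM : ∃ x, Nontrivial (M.V x)) :
    ∃ a b : Fin (ℓ + 1), a ≤ b ∧ ∃ (W : ∀ x, Submodule K (M.V x)) (h : IsSubrep M W),
      W a ≠ ⊤ ∧ Nonempty (RepIso M (prodRep (intervalRep 1 a b) (subrep M W h))) := by
  classical
  obtain ⟨a, ha, hmin⟩ := WellFounded.has_min (wellFounded_lt (α := Fin (ℓ + 1)))
    {x | Nontrivial (M.V x)} hM
  have htriv : ∀ x < a, Subsingleton (M.V x) := fun x hx =>
    not_nontrivial_iff_subsingleton.1 fun h => hmin x h hx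
  have : Nontrivial (M.V a) := ha
  obtain ⟨v, hv⟩ := exists_ne (0 : M.V a)
  obtain ⟨u, hu0, husucc⟩ := exists_propagated_vector (M := M) (Pi.single a v)
  have hua : u a = v := by
    induction a using Fin.cases with
    | zero => simp [hu0]
    | succ e =>
      have := htriv e.castSucc (by simp [Fin.lt_def])
      simp [husucc, Subsingleton.elim (u e.castSucc) 0]
  have hustep : ∀ e : Fin ℓ, a ≤ e.castSucc → M.f e (u e.castSucc) = u e.succ := by
    intro e he
    rw [husucc, Pi.single_eq_of_ne (by rintro rfl; simp [Fin.le_def] at he), zero_add]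
  obtain ⟨b, hb, hmax⟩ := (Set.toFinite {x | u x ≠ 0}).exists_maximalFor id _ ⟨a, by simpa [hua]⟩
  have hzero : ∀ x, b < x → u x = 0 := fun x hx => by
    by_contra h
    exact absurd (hmax h hx.le) (not_le.2 hx)
  have hab : a ≤ b := by
    by_contra! h
    exact hv (hua ▸ hzero a h)
  obtain ⟨φ₀, hφ₀⟩ : ∃ φ₀ : M.V b →ₗ[K] K, φ₀ (u b) = 1 := by
    obtain ⟨ψ, hψ⟩ := not_forall.1 (mt (Module.forall_dual_apply_eq_zero_iff K (u b)).1 hb)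
    exact ⟨(ψ (u b))⁻¹ • ψ, by simp [hψ]⟩
  obtain ⟨φ, hφlast, hφcast⟩ := exists_propagated_functional (M := M) (Pi.single b φ₀)
  have hφzero : ∀ x, b < x → φ x = 0 := by
    intro x
    induction x using Fin.reverseInduction with
    | last => exact fun h => by rw [hφlast, Pi.single_eq_of_ne h.ne']
    | cast e ih =>
      intro h
      rw [hφcast, Pi.single_eq_of_ne h.ne', ih (h.trans (by simp [Fin.lt_def])),
        LinearMap.zero_comp, add_zero]
  have hφb : φ b = φ₀ := by
    induction b using Fin.lastCases with
    | last => simp [hφlast]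
    | cast e => simp [hφcast, hφzero e.succ (by simp [Fin.lt_def])]
  have hφstep : ∀ e : Fin ℓ, e.succ ≤ b → φ e.succ ∘ₗ M.f e = φ e.castSucc := by
    intro e he
    rw [hφcast, Pi.single_eq_of_ne (by rintro rfl; simp [Fin.le_def] at he), zero_add]
  have hone : ∀ x, a ≤ x ∧ x ≤ b → φ x (u x) = 1 := by
    intro x
    induction x using Fin.reverseInduction with
    | last =>
      rintro ⟨-, h⟩
      obtain rfl := (Fin.last_le_iff.1 h)
      rw [hφb, hφ₀]
    | cast e ih =>
      rintro ⟨h₁, h₂⟩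
      rcases h₂.eq_or_lt with rfl | h
      · rw [hφb, hφ₀]
      · have h' : e.succ ≤ b := by simpa [Fin.le_def, Fin.lt_def] using h
        rw [← hφstep e h', LinearMap.comp_apply, hustep e h₁]
        exact ih ⟨h₁.trans (by simp [Fin.le_def]), h'⟩
  have hout : ∀ x, ¬(a ≤ x ∧ x ≤ b) → φ x = 0 ∧ u x = 0 := by
    intro x hx
    rcases lt_or_ge x a with h | h
    · have := htriv x h
      exact ⟨Subsingleton.elim _ _, Subsingleton.elim _ _⟩
    · have h' : b < x := not_le.1 fun h' => hx ⟨h, h'⟩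
      exact ⟨hφzero x h', hzero x h'⟩
  obtain ⟨h, ⟨ψ⟩⟩ := exists_repIso_prodRep u φ hone (fun x hx => (hout x hx).1)
    (fun x hx => (hout x hx).2) (fun e he => hφstep e he.2) (fun e he => hustep e he.1)
  refine ⟨a, b, hab, _, h, fun htop => ?_, ⟨ψ⟩⟩
  have : φ a (u a) = 0 := by
    rw [← LinearMap.mem_ker]
    exact htop ▸ Submodule.mem_top
  rw [hone a ⟨le_rfl, hab⟩] at this
  exact one_ne_zero this

/-- Every representation of the equioriented quiver is a direct sum of intervals. -/
theorem exists_repIso_sumRep (M : QRep (Fin (ℓ + 1)) (Fin ℓ) Fin.castSucc Fin.succ K) :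
    ∃ L : List (Fin (ℓ + 1) × Fin (ℓ + 1)), (∀ p ∈ L, p.1 ≤ p.2) ∧
      Nonempty (RepIso M (sumRep K L)) := by
  induction hn : ∑ x, dimVec M x using Nat.strong_induction_on generalizing M with
  | _ n ih =>
    subst hn
    by_cases hM : ∃ x, Nontrivial (M.V x)
    · obtain ⟨a, b, hab, W, h, hW, ⟨φ⟩⟩ := exists_interval_summand hM
      obtain ⟨L, hL, ⟨ψ⟩⟩ := ih _ (Finset.sum_lt_sum
        (fun x _ => Submodule.finrank_le (W x))
        ⟨a, Finset.mem_univ a, Submodule.finrank_lt hW⟩) (subrep M W h) rfl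
      exact ⟨(a, b) :: L, by simpa [hab] using hL, ⟨φ.trans (ψ.prodCongrRight _)⟩⟩
    · simp only [not_exists, not_nontrivial_iff_subsingleton] at hM
      refine ⟨[], by simp, ⟨⟨fun x => ?_, fun e v => Subsingleton.elim (α := PUnit) _ _⟩⟩⟩
      exact
        { toFun := fun _ => PUnit.unit
          invFun := fun _ => 0
          map_add' := fun _ _ => rfl
          map_smul' := fun _ _ => rfl
          left_inv := fun _ => (hM x).elim _ _
          right_inv := fun _ => rfl }

end Interval

end QRep

namespace QRep

section Counting

variable {K : Type} [Field K] {ℓ : ℕ}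

/-- The slope of the interval representation supported on `[p.1, p.2]`. -/
noncomputable def intervalSlope (α : Fin (ℓ + 1) → ℝ) (p : Fin (ℓ + 1) × Fin (ℓ + 1)) : ℝ :=
  (∑ x ∈ Finset.Icc p.1 p.2, α x) / (Finset.Icc p.1 p.2).card

theorem card_Icc_pos {a b : Fin (ℓ + 1)} (hab : a ≤ b) : (0 : ℝ) < (Finset.Icc a b).card :=
  Nat.cast_pos.2 (Finset.card_pos.2 (Finset.nonempty_Icc.2 hab))

theorem sum_Icc_sub_eq (α : Fin (ℓ + 1) → ℝ) (t : ℝ) {a b : Fin (ℓ + 1)} (hab : a ≤ b) :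
    ∑ x ∈ Finset.Icc a b, (α x - t) =
      (intervalSlope α (a, b) - t) * (Finset.Icc a b).card := by
  rw [intervalSlope, sub_mul, div_mul_cancel₀ _ (card_Icc_pos hab).ne',
    Finset.sum_sub_distrib, Finset.sum_const, nsmul_eq_mul, mul_comm t]

theorem intervalSlope_lt {α : Fin (ℓ + 1) → ℝ} (hα : StrictAnti α) {a b c : Fin (ℓ + 1)}
    (hab : a ≤ b) (hbc : b < c) : intervalSlope α (a, c) < intervalSlope α (a, b) := by
  set s := intervalSlope α (a, b)
  have hb : α b ≤ s := by
    have h := sum_Icc_sub_eq α (α b) hab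
    have h0 : 0 ≤ ∑ x ∈ Finset.Icc a b, (α x - α b) := Finset.sum_nonneg fun x hx =>
      sub_nonneg.2 (hα.antitone (Finset.mem_Icc.1 hx).2)
    rw [h] at h0
    exact sub_nonneg.1 (nonneg_of_mul_nonneg_left h0 (card_Icc_pos hab))
  have h := sum_Icc_sub_eq α s (hab.trans hbc.le)
  have hsplit : Finset.Icc a c = Finset.Icc a b ∪ Finset.Ioc b c := by
    ext x
    simp only [Finset.mem_Icc, Finset.mem_union, Finset.mem_Ioc]
    omega
  have hdisj : Disjoint (Finset.Icc a b) (Finset.Ioc b c) :=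
    Finset.disjoint_left.2 fun x hx hx' =>
      absurd (Finset.mem_Icc.1 hx).2 (not_le.2 (Finset.mem_Ioc.1 hx').1)
  have hneg : ∑ x ∈ Finset.Ioc b c, (α x - s) < 0 :=
    Finset.sum_neg (fun x hx => by linarith [hα (Finset.mem_Ioc.1 hx).1])
      ⟨c, Finset.mem_Ioc.2 ⟨hbc, le_rfl⟩⟩
  have hlt : (intervalSlope α (a, c) - s) * (Finset.Icc a c).card < 0 := by
    rw [← h, hsplit, Finset.sum_union hdisj, sum_Icc_sub_eq α s hab]
    simpa [s] using hneg
  exact sub_neg.1 (neg_of_mul_neg_left hlt (card_Icc_pos (hab.trans hbc.le)).le)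

theorem intervalSlope_inj {α : Fin (ℓ + 1) → ℝ} (hα : StrictAnti α) {a b c : Fin (ℓ + 1)}
    (hab : a ≤ b) (hac : a ≤ c) (h : intervalSlope α (a, b) = intervalSlope α (a, c)) : b = c := by
  rcases lt_trichotomy b c with hlt | heq | hlt
  · exact absurd h (intervalSlope_lt hα hab hlt).ne'
  · exact heq
  · exact absurd h (intervalSlope_lt hα hac hlt).ne

/-- Along a decreasing central charge, interval representations are semistable: any
subrepresentation `Z` satisfies the slope inequality, multiplied out. -/
theorem excess_intervalRep_le {α : Fin (ℓ + 1) → ℝ} (hα : Antitone α) (t : ℝ)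
    {a b : Fin (ℓ + 1)} (hab : a ≤ b) {Z : ∀ x, Submodule K ((intervalRep (1 : K) a b).V x)}
    (hZ : IsSubrep _ Z) :
    excess α t _ Z ≤ (intervalSlope α (a, b) - t) * ∑ x, (Module.finrank K (Z x) : ℝ) := by
  have hzero : ∀ x, x ∉ Finset.Icc a b → Module.finrank K (Z x) = 0 := by
    intro x hx
    have := Submodule.finrank_le (Z x)
    rw [finrank_intervalRep, if_neg (by simpa using hx)] at this
    omega
  have hmono : ∀ y x, a ≤ x → x ≤ y → y ≤ b →
      Module.finrank K (Z x) ≤ Module.finrank K (Z y) := by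
    intro y
    induction y using Fin.induction with
    | zero =>
      intro x _ hx _
      rw [Fin.le_zero_iff.1 hx]
    | succ e ih =>
      intro x hax hx hb
      rcases hx.eq_or_lt with rfl | hlt
      · rfl
      have hxe : x ≤ e.castSucc := Fin.le_castSucc_iff.2 hlt
      have heb : e.castSucc ≤ b := (Fin.castSucc_le_succ e).trans hb
      refine (ih x hax hxe heb).trans ?_
      have hinj : Function.Injective ((intervalRep (1 : K) a b).f e) := by
        intro v w hvw
        funext q
        have := congrFun hvw ⟨hax.trans hx, hb⟩
        rw [intervalRep_f_apply, intervalRep_f_apply] at this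
        simpa [q.down] using this
      rw [(Submodule.equivMapOfInjective _ hinj (Z e.castSucc)).finrank_eq]
      exact Submodule.finrank_mono (hZ e)
  have hsum : ∑ x, (Module.finrank K (Z x) : ℝ) =
      ∑ x ∈ Finset.Icc a b, (Module.finrank K (Z x) : ℝ) :=
    (Finset.sum_subset (Finset.subset_univ _) fun x _ hx => by simp [hzero x hx]).symm
  have hexc : excess α t _ Z =
      ∑ x ∈ Finset.Icc a b, (α x - t) * (Module.finrank K (Z x) : ℝ) :=
    (Finset.sum_subset (Finset.subset_univ _) fun x _ hx => by simp [hzero x hx]).symm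
  have hanti : AntivaryOn (fun x => α x - t) (fun x => (Module.finrank K (Z x) : ℝ))
      (Finset.Icc a b : Finset (Fin (ℓ + 1))) := by
    intro x hx y hy hxy
    rw [Finset.mem_coe, Finset.mem_Icc] at hx hy
    refine sub_le_sub_right (hα (le_of_not_gt fun h => ?_)) t
    exact absurd (hmono x y hy.1 h.le hx.2) (not_le.2 (Nat.cast_lt.1 hxy))
  have hcheb := hanti.card_mul_sum_le_sum_mul_sum
  rw [← hexc, ← hsum, sum_Icc_sub_eq α t hab] at hcheb
  refine le_of_mul_le_mul_left ?_ (card_Icc_pos hab)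
  linarith

open scoped Classical in
theorem exists_isMaximizer_intervalRep {α : Fin (ℓ + 1) → ℝ} (hα : Antitone α) (t : ℝ)
    {a b : Fin (ℓ + 1)} (hab : a ≤ b) :
    ∃ H, IsMaximizer α t (intervalRep (1 : K) a b) H ∧ ∀ x, Module.finrank K (H x) =
      if t ≤ intervalSlope α (a, b) ∧ a ≤ x ∧ x ≤ b then 1 else 0 := by
  by_cases ht : t ≤ intervalSlope α (a, b)
  · have hrank : ∀ x, Module.finrank K
        ((⊤ : ∀ x, Submodule K ((intervalRep (1 : K) a b).V x)) x) =
          if a ≤ x ∧ x ≤ b then 1 else 0 := fun x => by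
      rw [Pi.top_apply, finrank_top, finrank_intervalRep]
    refine ⟨⊤, ⟨isSubrep_top _, fun Z hZ => ⟨?_, fun _ => le_top⟩⟩, fun x => by
      rw [hrank]; simp [ht]⟩
    refine (excess_intervalRep_le hα t hab hZ).trans ?_
    have htop : excess α t (intervalRep (1 : K) a b) ⊤ =
        (intervalSlope α (a, b) - t) * (Finset.Icc a b).card := by
      rw [← sum_Icc_sub_eq α t hab, excess]
      simp only [hrank, ← Finset.mem_Icc, Nat.cast_ite, Nat.cast_one, Nat.cast_zero, mul_ite,
        mul_one, mul_zero, Finset.sum_ite_mem, Finset.univ_inter]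
    rw [htop]
    refine mul_le_mul_of_nonneg_left ?_ (sub_nonneg.2 ht)
    calc ∑ x, (Module.finrank K (Z x) : ℝ)
        ≤ ∑ x, if x ∈ Finset.Icc a b then (1 : ℝ) else 0 :=
          Finset.sum_le_sum fun x _ => by
            have := Submodule.finrank_le (Z x)
            rw [finrank_intervalRep] at this
            simp only [Finset.mem_Icc]
            exact_mod_cast this
      _ = (Finset.Icc a b).card := by
          rw [Finset.sum_ite_mem, Finset.univ_inter, Finset.sum_const, nsmul_one]
  · have hbot : excess α t (intervalRep (1 : K) a b) ⊥ = 0 := by simp [excess]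
    refine ⟨⊥, ⟨isSubrep_bot _, fun Z hZ => ?_⟩, fun x => by simp [ht]⟩
    have hle := excess_intervalRep_le hα t hab hZ
    have h0 : 0 ≤ ∑ x, (Module.finrank K (Z x) : ℝ) :=
      Finset.sum_nonneg fun _ _ => Nat.cast_nonneg _
    have hneg : intervalSlope α (a, b) - t < 0 := sub_neg.2 (not_le.1 ht)
    rw [hbot]
    refine ⟨hle.trans (mul_nonpos_of_nonpos_of_nonneg hneg.le h0), fun he x => ?_⟩
    rw [he] at hle
    have hsum : ∑ x, (Module.finrank K (Z x) : ℝ) = 0 :=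
      le_antisymm (nonpos_of_mul_nonneg_right hle hneg) h0
    have := (Finset.sum_eq_zero_iff_of_nonneg (fun x _ => Nat.cast_nonneg _)).1 hsum x
      (Finset.mem_univ x)
    exact (Submodule.finrank_eq_zero.1 (by exact_mod_cast this)).le

open scoped Classical in
/-- The number of intervals of slope at least `t` in the list `L` which contain `x`. -/
noncomputable def countSlopeGE (α : Fin (ℓ + 1) → ℝ) (L : List (Fin (ℓ + 1) × Fin (ℓ + 1)))
    (t : ℝ) (x : Fin (ℓ + 1)) : ℕ :=
  L.countP fun p => decide (t ≤ intervalSlope α p ∧ p.1 ≤ x ∧ x ≤ p.2)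

theorem exists_isMaximizer_sumRep {α : Fin (ℓ + 1) → ℝ} (hα : Antitone α) (t : ℝ)
    {L : List (Fin (ℓ + 1) × Fin (ℓ + 1))} (hL : ∀ p ∈ L, p.1 ≤ p.2) :
    ∃ H, IsMaximizer α t (sumRep K L) H ∧
      ∀ x, Module.finrank K (H x) = countSlopeGE α L t x := by
  induction L with
  | nil =>
    have hsub : ∀ (Z Z' : ∀ x, Submodule K ((sumRep K ([] : List (Fin (ℓ + 1) × Fin (ℓ + 1)))).V x)),
        Z = Z' := fun Z Z' => funext fun x =>
      Subsingleton.elim (α := Submodule K PUnit) (Z x) (Z' x)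
    refine ⟨⊥, ⟨isSubrep_bot _, fun Z _ => ?_⟩, fun x => by simp [countSlopeGE]⟩
    rw [hsub Z ⊥]
    exact ⟨le_rfl, fun _ => le_rfl⟩
  | cons p L ih =>
    rw [List.forall_mem_cons] at hL
    obtain ⟨H, hH, hdim⟩ := exists_isMaximizer_intervalRep (K := K) hα t hL.1
    obtain ⟨H', hH', hdim'⟩ := ih hL.2
    refine ⟨_, hH.prod hH', fun x => ?_⟩
    refine (finrank_submodule_prod (H x) (H' x)).trans ?_
    rw [hdim, hdim', countSlopeGE, countSlopeGE, List.countP_cons, add_comm]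
    simp

theorem countSlopeGE_pos_iff {α : Fin (ℓ + 1) → ℝ} {L : List (Fin (ℓ + 1) × Fin (ℓ + 1))}
    {t : ℝ} {x : Fin (ℓ + 1)} :
    0 < countSlopeGE α L t x ↔ ∃ p ∈ L, t ≤ intervalSlope α p ∧ p.1 ≤ x ∧ x ≤ p.2 := by
  simp [countSlopeGE, List.countP_pos_iff]

/-- A list of intervals is determined up to permutation by counting intervals by slope. -/
theorem perm_of_countSlopeGE_eq {α : Fin (ℓ + 1) → ℝ} (hα : StrictAnti α)
    {L L' : List (Fin (ℓ + 1) × Fin (ℓ + 1))} (hL : ∀ p ∈ L, p.1 ≤ p.2)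
    (hL' : ∀ p ∈ L', p.1 ≤ p.2) (h : countSlopeGE α L = countSlopeGE α L') : L.Perm L' := by
  induction hn : L.length generalizing L L' with
  | zero =>
    rw [List.length_eq_zero_iff] at hn
    subst hn
    rcases L' with - | ⟨p, L'⟩
    · exact List.Perm.nil
    · have hp : 0 < countSlopeGE α (p :: L') (intervalSlope α p) p.1 :=
        countSlopeGE_pos_iff.2 ⟨p, by simp, le_rfl, le_rfl, hL' p (by simp)⟩
      rw [← h] at hp
      simp [countSlopeGE] at hp
  | succ n ih =>
    have hne : {p | p ∈ L}.Nonempty := by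
      obtain ⟨p, hp⟩ := List.exists_mem_of_length_pos (l := L) (by omega)
      exact ⟨p, hp⟩
    obtain ⟨p, hp, hpmax⟩ := (List.finite_toSet L).exists_maximalFor
      (fun p => toLex (intervalSlope α p, OrderDual.toDual p.1)) _ hne
    have hlex : ∀ q ∈ L, intervalSlope α q < intervalSlope α p ∨
        intervalSlope α q = intervalSlope α p ∧ p.1 ≤ q.1 := fun q hq =>
      Prod.Lex.toLex_le_toLex.1 ((le_total _ _).elim id (hpmax hq))
    have hmax : ∀ q ∈ L, intervalSlope α q ≤ intervalSlope α p := fun q hq =>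
      (hlex q hq).elim le_of_lt fun h => h.1.le
    have hmin : ∀ q ∈ L, intervalSlope α q = intervalSlope α p → p.1 ≤ q.1 := fun q hq hs =>
      (hlex q hq).elim (fun h => absurd hs h.ne) And.right
    have hmem : p ∈ L' := by
      have h₁ : 0 < countSlopeGE α L (intervalSlope α p) p.1 :=
        countSlopeGE_pos_iff.2 ⟨p, hp, le_rfl, le_rfl, hL p hp⟩
      rw [h] at h₁
      obtain ⟨q, hq, hs, hq₁, hq₂⟩ := countSlopeGE_pos_iff.1 h₁
      have h₂ : 0 < countSlopeGE α L' (intervalSlope α q) q.1 :=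
        countSlopeGE_pos_iff.2 ⟨q, hq, le_rfl, le_rfl, hL' q hq⟩
      rw [← h] at h₂
      obtain ⟨r, hr, hs', hr₁, hr₂⟩ := countSlopeGE_pos_iff.1 h₂
      have hsr := le_antisymm (hmax r hr) (hs.trans hs')
      have hsq : intervalSlope α p = intervalSlope α q :=
        le_antisymm hs (hs'.trans (hmax r hr))
      have hfst : p.1 = q.1 := le_antisymm ((hmin r hr hsr).trans hr₁) hq₁
      have hsnd : p.2 = q.2 := by
        refine intervalSlope_inj hα (hL p hp) (hfst ▸ hL' q hq) (hsq.trans ?_)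
        rw [hfst]
      rwa [Prod.ext hfst hsnd]
    have hp₁ := List.perm_cons_erase hp
    have hp₂ := List.perm_cons_erase hmem
    refine hp₁.trans (List.Perm.trans (List.Perm.cons p ?_) hp₂.symm)
    refine ih (fun q hq => hL q (List.mem_of_mem_erase hq))
      (fun q hq => hL' q (List.mem_of_mem_erase hq)) ?_ (by rw [List.length_erase_of_mem hp, hn]; rfl)
    funext t x
    have := congrFun (congrFun h t) x
    rw [countSlopeGE, countSlopeGE, hp₁.countP_eq, hp₂.countP_eq, List.countP_cons,
      List.countP_cons] at this
    exact Nat.add_right_cancel this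

theorem complete_of_strictAnti {α : Fin (ℓ + 1) → ℝ} (hα : StrictAnti α) :
    Complete (Q₁ := Fin ℓ) (σ := Fin.castSucc) (τ := Fin.succ) (K := K) α := by
  intro M N hMN
  obtain ⟨L, hL, ⟨φ⟩⟩ := exists_repIso_sumRep M
  obtain ⟨L', hL', ⟨ψ⟩⟩ := exists_repIso_sumRep N
  have hcount : countSlopeGE α L = countSlopeGE α L' := by
    funext t x
    obtain ⟨H, H', hH, hH', hdim⟩ := hMN.exists_isMaximizer t
    obtain ⟨A, hA, hAdim⟩ := exists_isMaximizer_sumRep (K := K) hα.antitone t hL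
    obtain ⟨B, hB, hBdim⟩ := exists_isMaximizer_sumRep (K := K) hα.antitone t hL'
    rw [← hAdim, ← hBdim, ← (hH.map φ).unique hA, ← (hH'.map ψ).unique hB]
    change Module.finrank K ((H x).map _) = Module.finrank K ((H' x).map _)
    rw [LinearEquiv.finrank_map_eq, LinearEquiv.finrank_map_eq, hdim]
  obtain ⟨χ⟩ := sumRep_congr_of_perm (K := K) (perm_of_countSlopeGE_eq hα hL hL' hcount)
  exact ⟨(φ.trans χ).trans ψ.symm⟩

end Counting

end QRep

namespace QRep

section Converse

section Support

variable {Q₀ Q₁ : Type} {σ τ : Q₁ → Q₀} {K : Type} [Field K] [Fintype Q₀]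

theorem slopeVec_quotDimVec_eq {α : Q₀ → ℝ} {M : QRep Q₀ Q₁ σ τ K}
    {A B : ∀ x, Submodule K (M.V x)} (hAB : A ≤ B) (hne : ∃ x, B x ≠ A x) {s : ℝ}
    (hs : ∀ x, B x ≠ A x → α x = s) : slopeVec α (quotDimVec M A B) = s := by
  have h := sum_sub_mul_eq α s (quotDimVec M A B)
  have h0 : ∑ x, (α x - s) * (quotDimVec M A B x : ℝ) = 0 := by
    refine Finset.sum_eq_zero fun x _ => ?_
    by_cases hx : B x = A x
    · rw [quotDimVec, Nat.sub_eq_zero_of_le (Submodule.finrank_mono hx.le), Nat.cast_zero, mul_zero]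
    · simp [hs x hx]
  rw [h0, eq_comm, mul_eq_zero] at h
  exact sub_eq_zero.1 (h.resolve_right (sum_quotDimVec_pos M hAB hne).ne')

theorem semistableQuot_of_const {α : Q₀ → ℝ} {M : QRep Q₀ Q₁ σ τ K}
    {A B : ∀ x, Submodule K (M.V x)} {s : ℝ}
    (hs : ∀ x, B x ≠ A x → α x = s) : SemistableQuot α M A B := by
  intro Z _ hAZ hZB hne
  have hsub : ∀ x, Z x ≠ A x → B x ≠ A x := fun x hx h =>
    hx (le_antisymm (h ▸ hZB x) (hAZ x))
  rw [slopeVec_quotDimVec_eq hAZ hne fun x hx => hs x (hsub x hx),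
    slopeVec_quotDimVec_eq (fun x => (hAZ x).trans (hZB x)) (hne.imp hsub) hs]

end Support

variable {K : Type} [Field K] {ℓ : ℕ} {α : Fin (ℓ + 1) → ℝ} {i : Fin ℓ}

theorem intervalRep_subsingleton (c : K) {a b x : Fin (ℓ + 1)} (hx : ¬(a ≤ x ∧ x ≤ b)) :
    Subsingleton ((intervalRep c a b).V x) :=
  ⟨fun _ _ => funext fun q => absurd q.down hx⟩

theorem intervalRep_nontrivial (c : K) {a b x : Fin (ℓ + 1)} (hx : a ≤ x ∧ x ≤ b) :
    Nontrivial ((intervalRep c a b).V x) :=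
  ⟨0, fun _ => 1, fun h => zero_ne_one (congrFun h ⟨hx⟩)⟩

theorem castSucc_le_and_le_succ_iff {x : Fin (ℓ + 1)} :
    i.castSucc ≤ x ∧ x ≤ i.succ ↔ x = i.castSucc ∨ x = i.succ := by
  simp only [Fin.le_def, Fin.ext_iff, Fin.val_castSucc, Fin.val_succ]
  omega

theorem eq_or_eq_of_ne (c : K) {x : Fin (ℓ + 1)}
    {A B : Submodule K ((intervalRep c i.castSucc i.succ).V x)} (h : A ≠ B) :
    x = i.castSucc ∨ x = i.succ := by
  by_contra hx
  have := intervalRep_subsingleton c (mt castSucc_le_and_le_succ_iff.1 hx)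
  exact h (Subsingleton.elim A B)

/-- The one-step filtration of an interval of length two on which `α` is constant. -/
noncomputable def hnFiltrationOfEq (h : α i.castSucc = α i.succ) (c : K) :
    HNFiltration α (intervalRep c i.castSucc i.succ) where
  n := 1
  W := ![⊥, ⊤]
  subrep := Fin.forall_fin_two.2 ⟨isSubrep_bot _, isSubrep_top _⟩
  bot _ := rfl
  top _ := rfl
  mono j x := by
    obtain rfl := Subsingleton.elim j 0
    exact bot_le
  proper j := by
    obtain rfl := Subsingleton.elim j 0
    have := intervalRep_nontrivial c (castSucc_le_and_le_succ_iff.2 (Or.inr (Eq.refl i.succ)))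
    exact ⟨i.succ, bot_ne_top⟩
  ss j := semistableQuot_of_const (s := α i.succ) fun x hx =>
    (eq_or_eq_of_ne c hx).elim (fun hx => hx ▸ h) fun hx => hx ▸ rfl
  dec j k hjk := absurd (Subsingleton.elim j k) hjk.ne

/-- The subrepresentation of an interval of length two supported at its end. -/
def endSub (c : K) (i : Fin ℓ) (x : Fin (ℓ + 1)) :
    Submodule K ((intervalRep c i.castSucc i.succ).V x) :=
  if x = i.succ then ⊤ else ⊥

theorem isSubrep_endSub (c : K) (i : Fin ℓ) : IsSubrep _ (endSub c i) := by
  intro e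
  by_cases h : e.castSucc = i.succ
  · have := intervalRep_subsingleton c (a := i.castSucc) (b := i.succ) (x := e.succ) (by
      simp only [Fin.le_def, Fin.ext_iff, Fin.val_castSucc, Fin.val_succ] at h ⊢
      omega)
    exact (Subsingleton.elim _ _ : _ = endSub c i e.succ).le
  · simp [endSub, h]

theorem eq_succ_of_endSub_ne_bot (c : K) {x : Fin (ℓ + 1)} (h : endSub c i x ≠ ⊥) :
    x = i.succ := by
  by_contra hx
  exact h (if_neg hx)

theorem eq_castSucc_of_top_ne_endSub (c : K) {x : Fin (ℓ + 1)} (h : ⊤ ≠ endSub c i x) :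
    x = i.castSucc :=
  (eq_or_eq_of_ne c h).resolve_right fun hx => h (if_pos hx).symm

theorem endSub_succ_ne_bot (c : K) (i : Fin ℓ) : endSub c i i.succ ≠ ⊥ := by
  have := intervalRep_nontrivial c (castSucc_le_and_le_succ_iff.2 (Or.inr (Eq.refl i.succ)))
  rw [endSub, if_pos rfl]
  exact top_ne_bot

theorem top_ne_endSub_castSucc (c : K) (i : Fin ℓ) : ⊤ ≠ endSub c i i.castSucc := by
  have := intervalRep_nontrivial c (castSucc_le_and_le_succ_iff.2 (Or.inl (Eq.refl i.castSucc)))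
  rw [endSub, if_neg (Fin.castSucc_lt_succ).ne]
  exact top_ne_bot

/-- The two-step filtration of an interval of length two on which `α` increases. -/
noncomputable def hnFiltrationOfLT (h : α i.castSucc < α i.succ) (c : K) :
    HNFiltration α (intervalRep c i.castSucc i.succ) where
  n := 2
  W := ![⊥, endSub c i, ⊤]
  subrep := Fin.forall_fin_succ.2 ⟨isSubrep_bot _,
    Fin.forall_fin_two.2 ⟨isSubrep_endSub c i, isSubrep_top _⟩⟩
  bot _ := rfl
  top _ := rfl
  mono := Fin.forall_fin_two.2 ⟨fun _ => bot_le, fun _ => le_top⟩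
  proper := Fin.forall_fin_two.2
    ⟨⟨i.succ, (endSub_succ_ne_bot c i).symm⟩, ⟨i.castSucc, (top_ne_endSub_castSucc c i).symm⟩⟩
  ss := Fin.forall_fin_two.2
    ⟨semistableQuot_of_const (s := α i.succ) fun _ hx =>
        congrArg α (eq_succ_of_endSub_ne_bot c hx),
      semistableQuot_of_const (s := α i.castSucc) fun _ hx =>
        congrArg α (eq_castSucc_of_top_ne_endSub c hx)⟩
  dec j k hjk := by
    obtain ⟨rfl, rfl⟩ : j = 0 ∧ k = 1 := by omega
    have h₀ : slopeVec α (quotDimVec (intervalRep c i.castSucc i.succ) ⊥ (endSub c i)) =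
        α i.succ := slopeVec_quotDimVec_eq bot_le ⟨_, endSub_succ_ne_bot c i⟩ fun _ hx =>
      congrArg α (eq_succ_of_endSub_ne_bot c hx)
    have h₁ : slopeVec α (quotDimVec (intervalRep c i.castSucc i.succ) (endSub c i) ⊤) =
        α i.castSucc := slopeVec_quotDimVec_eq le_top ⟨_, top_ne_endSub_castSucc c i⟩ fun _ hx =>
      congrArg α (eq_castSucc_of_top_ne_endSub c hx)
    exact (h₁.trans_lt h).trans_eq h₀.symm

theorem sameHNType_intervalRep (h : α i.castSucc ≤ α i.succ) (c d : K) :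
    SameHNType α (intervalRep c i.castSucc i.succ) (intervalRep d i.castSucc i.succ) := by
  rcases h.eq_or_lt with h | h
  · exact ⟨hnFiltrationOfEq h c, hnFiltrationOfEq h d, rfl⟩
  · exact ⟨hnFiltrationOfLT h c, hnFiltrationOfLT h d, rfl⟩

theorem isEmpty_repIso_intervalRep (i : Fin ℓ) :
    IsEmpty (RepIso (intervalRep (1 : K) i.castSucc i.succ)
      (intervalRep (0 : K) i.castSucc i.succ)) := by
  refine ⟨fun φ => ?_⟩
  let v : (intervalRep (1 : K) i.castSucc i.succ).V i.castSucc := fun _ => 1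
  have h := φ.comm i v
  have h0 : (intervalRep (0 : K) i.castSucc i.succ).f i (φ.g i.castSucc v) = 0 := by
    funext q
    rw [intervalRep_f_apply, zero_mul]
    rfl
  rw [h0, LinearEquiv.map_eq_zero_iff] at h
  have hle : i.castSucc ≤ i.succ := Fin.castSucc_le_succ i
  have h1 := congrFun h ⟨hle, le_rfl⟩
  rw [intervalRep_f_apply, dif_pos ⟨le_rfl, hle⟩, one_mul] at h1
  exact one_ne_zero h1

end Converse

end QRep

/-- **Complete central charges for ordinary persistence modules.** For the equioriented
type `A_ℓ` quiver `x₀ → x₁ → ⋯ → x_ℓ`, a central charge `α` is complete (i.e. equality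
of HN types along `α` implies isomorphism of representations) if and only if
`α(x_i) > α(x_{i+1})` for all `0 ≤ i ≤ ℓ-1`. -/
theorem complete_iff_strictly_decreasing (K : Type) [Field K] (ℓ : ℕ)
    (α : Fin (ℓ+1) → ℝ) :
    QRep.Complete (Q₁ := Fin ℓ) (σ := Fin.castSucc) (τ := Fin.succ) (K := K) α ↔
      ∀ i : Fin ℓ, α i.castSucc > α i.succ := by
  refine ⟨fun hα i => lt_of_not_ge fun h => ?_, fun h =>
    QRep.complete_of_strictAnti (Fin.strictAnti_iff_succ_lt.2 h)⟩
  obtain ⟨φ⟩ := hα _ _ (QRep.sameHNType_intervalRep h 1 0)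
  exact (QRep.isEmpty_repIso_intervalRep i).false φ
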